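/- For every integer k ≥ 2 and all real numbers λ₁, …, λ_k, w with 1 ≤ w ≤ min_j λ_j, there exist uncountably many vectors (ζ₁,…,ζ_k) ∈ ℝ^k, ℚ-linearly independent together with 1, such that λ₁(ζ_j) = λ_j for each j and χ_k(ζ₁,…,ζ_k) = w. -/

import Mathlib

open Filter

/-- distance from a real number to the nearest integer -/
noncomputable def distNearestInt (t : ℝ) : ℝ := |t - round t|

/-- exponents `ν` admissible for the classical simultaneous approximation exponent `ω_k` -/
def omegaSet (k : ℕ) (ζ : Fin k → ℝ) : Set ℝ :=
  {ν | ∀ N : ℕ, ∃ x : ℕ, N ≤ x ∧ 0 < x ∧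
      ∀ j, distNearestInt ((x : ℝ) * ζ j) ≤ (x : ℝ) ^ (-ν)}

/-- the classical exponent `ω_k` of simultaneous rational approximation -/
noncomputable def omegaExp (k : ℕ) (ζ : Fin k → ℝ) : EReal :=
  sSup ((fun ν : ℝ => (ν : EReal)) '' omegaSet k ζ)

/-- exponents `ν` admissible for the multi-denominator exponent `χ_k` -/
def chiSet (k : ℕ) (ζ : Fin k → ℝ) : Set ℝ :=
  {ν | ∀ X₀ : ℝ, ∃ X : ℝ, X₀ ≤ X ∧ ∃ x : Fin k → ℤ,
      (∀ j, x j ≠ 0) ∧ (∀ j, (|x j| : ℝ) ≤ X) ∧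
      ∀ j, distNearestInt ((x j : ℝ) * ζ j) ≤ X ^ (-ν)}

/-- the multi-denominator exponent `χ_k` of simultaneous approximation -/
noncomputable def chiExp (k : ℕ) (ζ : Fin k → ℝ) : EReal :=
  sSup ((fun ν : ℝ => (ν : EReal)) '' chiSet k ζ)

/-- exponents `μ` admissible for the one-dimensional exponent `λ₁` -/
def lambda1Set (ζ : ℝ) : Set ℝ :=
  {μ | ∀ N : ℕ, ∃ q : ℕ, N ≤ q ∧ 0 < q ∧
      distNearestInt ((q : ℝ) * ζ) ≤ (q : ℝ) ^ (-μ)}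

/-- the classical one-dimensional irrationality exponent `λ₁` -/
noncomputable def lambda1Exp (ζ : ℝ) : EReal :=
  sSup ((fun μ : ℝ => (μ : EReal)) '' lambda1Set ζ)

structure CFData (F : ℤ → ℤ → ℤ) (σ : ℕ → Bool) (ζ : ℝ) (p q : ℕ → ℤ) : Prop where
  q0 : q 0 = 1
  q1 : q 1 = 1
  p0 : p 0 = 0
  p1 : p 1 = 1
  hq : ∀ n, q (n+2) = (F (q n) (q (n+1)) + (σ n).toNat) * q (n+1) + q n
  hp : ∀ n, p (n+2) = (F (q n) (q (n+1)) + (σ n).toNat) * p (n+1) + p n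
  pos : ∀ n, 0 < (-1:ℝ)^n * (q n * ζ - p n)

/-- state recursion -/
def cfState (F : ℤ → ℤ → ℤ) (σ : ℕ → Bool) : ℕ → (ℤ × ℤ) × (ℤ × ℤ)
  | 0 => ((0, 1), (1, 1))
  | n+1 =>
    let s := cfState F σ n
    (s.2, ((F s.1.2 s.2.2 + (σ n).toNat) * s.2.1 + s.1.1,
           (F s.1.2 s.2.2 + (σ n).toNat) * s.2.2 + s.1.2))

lemma q_pos_of_rec {q a : ℕ → ℤ} (q0 : q 0 = 1) (q1 : q 1 = 1) (ha : ∀ n, 1 ≤ a n)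
    (hq : ∀ n, q (n+2) = a n * q (n+1) + q n) (n : ℕ) :
    1 ≤ q n ∧ q n ≤ q (n+1) ∧ (n:ℤ) ≤ q n := by
  have : 1 ≤ q n ∧ q n ≤ q (n+1) ∧ (n:ℤ) ≤ q n ∧ (n:ℤ) + 1 ≤ q (n+1) := by
    induction n with
    | zero => simp [q0, q1]
    | succ n ih =>
      obtain ⟨h1, h2, h3, h4⟩ := ih
      have := hq n
      have := ha n
      refine ⟨by linarith, by nlinarith, by push_cast; linarith, ?_⟩
      push_cast
      nlinarith
  tauto

lemma det_of_rec {p q a : ℕ → ℤ} (q0 : q 0 = 1) (q1 : q 1 = 1) (p0 : p 0 = 0) (p1 : p 1 = 1)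
    (hq : ∀ n, q (n+2) = a n * q (n+1) + q n)
    (hp : ∀ n, p (n+2) = a n * p (n+1) + p n) (n : ℕ) :
    p (n+1) * q n - p n * q (n+1) = (-1)^n := by
  induction n with
  | zero => simp [q0, q1, p0, p1]
  | succ n ih => rw [hq, hp, pow_succ, ← ih]; ring

lemma exists_limit {p q a : ℕ → ℤ} (q0 : q 0 = 1) (q1 : q 1 = 1) (p0 : p 0 = 0) (p1 : p 1 = 1)
    (ha : ∀ n, 1 ≤ a n)
    (hq : ∀ n, q (n+2) = a n * q (n+1) + q n)
    (hp : ∀ n, p (n+2) = a n * p (n+1) + p n) :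
    ∃ ζ : ℝ, ∀ n, 0 < (-1:ℝ)^n * (q n * ζ - p n) := by
  have qp : ∀ n, (0:ℝ) < q n := fun n => by
    have := (q_pos_of_rec q0 q1 ha hq n).1
    exact_mod_cast (by linarith : 0 < q n)
  have det : ∀ n, (p (n+1) * q n - p n * q (n+1) : ℝ) = (-1)^n := fun n => by
    exact_mod_cast det_of_rec q0 q1 p0 p1 hq hp n
  have det2 : ∀ n, (p (n+2) * q n - p n * q (n+2) : ℝ) = a n * (-1)^n := fun n => by
    have := det n
    rw [hq, hp, ← this]; push_cast; ring
  have ap : ∀ n, (0:ℝ) < a n := fun n => by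
    have := ha n
    exact_mod_cast (by linarith : 0 < a n)
  set f : ℕ → ℝ := fun m => p (2*m) / q (2*m) with hf
  set g : ℕ → ℝ := fun m => p (2*m+1) / q (2*m+1) with hg
  have fm : StrictMono f := by
    apply strictMono_nat_of_lt_succ
    intro m
    simp only [hf]
    rw [div_lt_div_iff₀ (qp _) (qp _)]
    have := det2 (2*m)
    rw [pow_mul] at this
    have hap := ap (2*m)
    norm_num at this
    rw [show 2 * (m+1) = 2*m+2 by ring]
    linarith
  have gm : StrictAnti g := by
    apply strictAnti_nat_of_succ_lt
    intro m
    simp only [hg]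
    rw [div_lt_div_iff₀ (qp _) (qp _)]
    have := det2 (2*m+1)
    rw [pow_succ, pow_mul] at this
    have hap := ap (2*m+1)
    norm_num at this
    rw [show 2 * (m+1) + 1 = 2*m+1+2 by ring]
    linarith
  have fg : f ≤ g := by
    intro m
    simp only [hf, hg]
    rw [div_le_div_iff₀ (qp _) (qp _)]
    have := det (2*m)
    rw [pow_mul] at this
    norm_num at *
    linarith
  have hmem := fm.monotone.ciSup_mem_iInter_Icc_of_antitone gm.antitone fg
  set ζ := ⨆ n, f n
  rw [Set.mem_iInter] at hmem
  refine ⟨ζ, fun n => ?_⟩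
  obtain ⟨m, rfl | rfl⟩ := Nat.even_or_odd' n
  · have h1 : f m < ζ := (fm (Nat.lt_succ_self m)).trans_le (hmem (m+1)).1
    simp only [hf] at h1
    rw [div_lt_iff₀ (qp _)] at h1
    rw [pow_mul]; norm_num; linarith
  · have h1 : ζ < g m := (hmem (m+1)).2.trans_lt (gm (Nat.lt_succ_self m))
    simp only [hg] at h1
    rw [lt_div_iff₀ (qp _)] at h1
    rw [pow_succ, pow_mul]; norm_num; linarith

lemma cf_exists (F : ℤ → ℤ → ℤ) (hF : ∀ x y, 1 ≤ F x y) (σ : ℕ → Bool) :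
    ∃ ζ p q, CFData F σ ζ p q := by
  set p : ℕ → ℤ := fun n => (cfState F σ n).1.1 with hp
  set q : ℕ → ℤ := fun n => (cfState F σ n).1.2 with hq
  have q0 : q 0 = 1 := rfl
  have q1 : q 1 = 1 := rfl
  have p0 : p 0 = 0 := rfl
  have p1 : p 1 = 1 := rfl
  have hq : ∀ n, q (n+2) = (F (q n) (q (n+1)) + (σ n).toNat) * q (n+1) + q n := fun n => rfl
  have hp : ∀ n, p (n+2) = (F (q n) (q (n+1)) + (σ n).toNat) * p (n+1) + p n := fun n => rfl
  obtain ⟨ζ, hζ⟩ := exists_limit (a := fun n => F (q n) (q (n+1)) + (σ n).toNat) q0 q1 p0 p1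
    (fun n => by have := hF (q n) (q (n+1)); omega) hq hp
  exact ⟨ζ, p, q, q0, q1, p0, p1, hq, hp, hζ⟩

lemma CFData.facts {F : ℤ → ℤ → ℤ} (hF : ∀ x y, 1 ≤ F x y) {σ : ℕ → Bool} {ζ : ℝ} {p q : ℕ → ℤ}
    (h : CFData F σ ζ p q) (n : ℕ) :
    1 ≤ q n ∧ q n ≤ q (n+1) ∧ (n:ℤ) ≤ q n ∧ p (n+1) * q n - p n * q (n+1) = (-1)^n := by
  have h1 := q_pos_of_rec (a := fun n => F (q n) (q (n+1)) + (σ n).toNat) h.q0 h.q1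
    (fun n => by have := hF (q n) (q (n+1)); omega) h.hq n
  have h2 := det_of_rec h.q0 h.q1 h.p0 h.p1 h.hq h.hp n
  tauto

lemma CFData.e_rec {F : ℤ → ℤ → ℤ} {σ : ℕ → Bool} {ζ : ℝ} {p q : ℕ → ℤ}
    (h : CFData F σ ζ p q) (n : ℕ) :
    (-1:ℝ)^(n+2) * (q (n+2) * ζ - p (n+2)) = (-1:ℝ)^n * (q n * ζ - p n) -
      (F (q n) (q (n+1)) + (σ n).toNat : ℤ) * ((-1:ℝ)^(n+1) * (q (n+1) * ζ - p (n+1))) := by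
  rw [h.hq, h.hp]; push_cast; ring

lemma CFData.inj {F : ℤ → ℤ → ℤ} (hF : ∀ x y, 1 ≤ F x y) {σ τ : ℕ → Bool} {ζ : ℝ}
    {p q p' q' : ℕ → ℤ}
    (h : CFData F σ ζ p q) (h' : CFData F τ ζ p' q') : σ = τ := by
  have dec : ∀ {σ : ℕ → Bool} {p q : ℕ → ℤ}, CFData F σ ζ p q → ∀ n,
      (-1:ℝ)^(n+2) * (q (n+2) * ζ - p (n+2)) < (-1:ℝ)^(n+1) * (q (n+1) * ζ - p (n+1)) := by
    intro σ p q h n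
    have h3 := h.e_rec (n+1)
    have p3 := h.pos (n+1+2)
    have p2 := h.pos (n+2)
    have : (1:ℝ) ≤ (F (q (n+1)) (q (n+1+1)) + (σ (n+1)).toNat : ℤ) := by
      have := hF (q (n+1)) (q (n+1+1))
      exact_mod_cast (by omega : 1 ≤ F (q (n+1)) (q (n+1+1)) + ((σ (n+1)).toNat : ℤ))
    rw [h3] at p3
    have e : n + 1 + 1 = n + 2 := rfl
    rw [e] at p3 this
    nlinarith
  have key : ∀ n, p n = p' n → q n = q' n → p (n+1) = p' (n+1) → q (n+1) = q' (n+1) →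
      σ n = τ n := by
    intro n e1 e2 e3 e4
    have d1 := dec h n
    have d2 := dec h' n
    have r1 := h.pos (n+2)
    have r2 := h'.pos (n+2)
    have r3 := h.pos (n+1)
    rw [h.e_rec] at d1 r1
    rw [h'.e_rec] at d2 r2
    rw [← e1, ← e2, ← e3, ← e4] at d2 r2
    set u := (-1:ℝ)^n * (q n * ζ - p n)
    set v := (-1:ℝ)^(n+1) * (q (n+1) * ζ - p (n+1))
    set a := F (q n) (q (n+1)) + (σ n).toNat with ha
    set b := F (q n) (q (n+1)) + (τ n).toNat with hb
    have hab : ∀ a b : ℤ, u - a * v < v → 0 < u - b * v → b ≤ a := by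
      intro a b h1 h2
      by_contra hc
      have : (a:ℝ) + 1 ≤ b := by exact_mod_cast (by omega : a + 1 ≤ b)
      nlinarith
    have : a = b := le_antisymm (hab _ _ d2 r1) (hab _ _ d1 r2)
    have h5 : (σ n).toNat = (τ n).toNat := by omega
    revert h5; cases σ n <;> cases τ n <;> simp
  have main : ∀ n, p n = p' n ∧ q n = q' n ∧ p (n+1) = p' (n+1) ∧ q (n+1) = q' (n+1) := by
    intro n
    induction n with
    | zero => simp [h.q0, h.q1, h.p0, h.p1, h'.q0, h'.q1, h'.p0, h'.p1]
    | succ n ih =>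
      obtain ⟨e1, e2, e3, e4⟩ := ih
      have k := key n e1 e2 e3 e4
      refine ⟨e3, e4, ?_, ?_⟩
      · rw [h.hp, h'.hp, k, e1, e2, e3, e4]
      · rw [h.hq, h'.hq, k, e2, e4]
  funext n
  obtain ⟨e1, e2, e3, e4⟩ := main n
  exact key n e1 e2 e3 e4

lemma CFData.upper {F : ℤ → ℤ → ℤ} (hF : ∀ x y, 1 ≤ F x y) {σ : ℕ → Bool} {ζ : ℝ} {p q : ℕ → ℤ}
    (h : CFData F σ ζ p q) (n : ℕ) : |q n * ζ - p n| ≤ 1 / q (n+1) := by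
  obtain ⟨a1, a2, _, a4⟩ := h.facts hF n
  have b1 : (1:ℝ) ≤ q n := by exact_mod_cast a1
  have b2 : (1:ℝ) ≤ q (n+1) := by exact_mod_cast a1.trans a2
  have b4 : (p (n+1) * q n - p n * q (n+1) : ℝ) = (-1)^n := by exact_mod_cast a4
  have e0 := h.pos n
  have e1 := h.pos (n+1)
  have habs : |q n * ζ - p n| = (-1:ℝ)^n * (q n * ζ - p n) := by
    rw [← abs_of_pos e0, abs_mul, abs_pow]; simp
  rw [habs, le_div_iff₀ (by linarith)]
  have hs : (-1:ℝ)^n * (q n * ζ - p n) * q (n+1) + (-1:ℝ)^(n+1) * (q (n+1) * ζ - p (n+1)) * q n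
      = 1 := by
    have : (-1:ℝ)^n * (-1:ℝ)^n = 1 := by rw [← mul_pow]; simp
    rw [pow_succ]; linear_combination (-1:ℝ)^n * b4 + this
  nlinarith

/-- lower bound -/
lemma CFData.lower {F : ℤ → ℤ → ℤ} (hF : ∀ x y, 1 ≤ F x y) {σ : ℕ → Bool} {ζ : ℝ} {p q : ℕ → ℤ}
    (h : CFData F σ ζ p q) (n : ℕ) (x y : ℤ) (hx : 0 < x) (hxq : 2 * x ≤ q n) :
    1 / (2 * q n) ≤ |x * ζ - y| := by
  obtain ⟨a1, a2, _, a4⟩ := h.facts hF n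
  have up := h.upper hF n
  have b1 : (1:ℝ) ≤ q n := by exact_mod_cast a1
  have b2 : (q n:ℝ) ≤ q (n+1) := by exact_mod_cast a2
  have bx : (2 * x:ℝ) ≤ q n := by exact_mod_cast hxq
  have bx0 : (0:ℝ) < x := by exact_mod_cast hx
  have hne : x * p n - y * q n ≠ 0 := by
    intro h0
    have cop : IsCoprime (q n) (p n) := by
      rcases neg_one_pow_eq_or ℤ n with e | e <;> rw [e] at a4
      · exact ⟨p (n+1), - q (n+1), by linarith⟩
      · exact ⟨-p (n+1), q (n+1), by linarith⟩
    have : q n ∣ x := cop.dvd_of_dvd_mul_right ⟨y, by linarith⟩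
    have := Int.le_of_dvd hx this
    omega
  have h1 : (1:ℝ) ≤ |(x * p n - y * q n : ℝ)| := by
    exact_mod_cast Int.one_le_abs hne
  have h2 : (x * p n - y * q n : ℝ) = q n * (x * ζ - y) - x * (q n * ζ - p n) := by ring
  rw [h2] at h1
  have h3 := abs_sub (q n * (x * ζ - y)) (x * (q n * ζ - p n))
  rw [abs_mul, abs_mul, abs_of_pos bx0, abs_of_pos (by linarith : (0:ℝ) < q n)] at h3
  have h4 : x * |q n * ζ - p n| ≤ 1/2 := by
    calc x * |q n * ζ - p n| ≤ x * (1 / q (n+1)) := by gcongr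
      _ ≤ 1/2 := by
        rw [mul_one_div, div_le_iff₀ (by linarith)]; linarith
  rw [div_le_iff₀ (by linarith)]
  nlinarith

/-- gap structure of approximations -/
def Gap (A B : ℕ → ℝ) (ζ : ℝ) : Prop :=
  (∀ i, ∃ x : ℕ, A i ≤ x ∧ (x:ℝ) ≤ 3 * A i ∧ distNearestInt (x * ζ) ≤ 2 / B i) ∧
  (∀ X : ℝ, 1 ≤ X → (∀ x : ℤ, x ≠ 0 → (|x| : ℝ) ≤ X → 1 / (12 * X) ≤ distNearestInt (x * ζ)) ∨
    ∃ i, A i ≤ 2 * X ∧ X ≤ 2 * B i ∧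
      ∀ x : ℤ, x ≠ 0 → (|x| : ℝ) ≤ X → 1 / (6 * B i) ≤ distNearestInt (x * ζ))

open Classical in
/-- base partial quotient -/
noncomputable def gapF (A B : ℕ → ℝ) (x y : ℤ) : ℤ :=
  if h : ∃ i, (x:ℝ) < A i ∧ A i ≤ y then max 1 ⌊B h.choose / y⌋ else 1

lemma gapF_one_le (A B : ℕ → ℝ) (x y : ℤ) : 1 ≤ gapF A B x y := by
  unfold gapF
  split_ifs
  · exact le_max_left _ _
  · exact le_rfl

lemma CFData.gap {A B : ℕ → ℝ} (hA : ∀ i, 2 ≤ A i) (hAB : ∀ i, A i ≤ B i)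
    (hBA : ∀ i, B i ≤ A (i+1)) (hA3 : ∀ i, 3 * A i < A (i+1))
    {σ : ℕ → Bool} {ζ : ℝ} {p q : ℕ → ℤ}
    (h : CFData (gapF A B) σ ζ p q) : Gap A B ζ := by
  have hF := gapF_one_le A B
  have Amono : StrictMono A := strictMono_nat_of_lt_succ fun i => by
    have := hA3 i; have := hA i; linarith
  have hBl : ∀ l i, l < i → B l ≤ A i := fun l i hli =>
    (hBA l).trans (Amono.monotone hli)
  have qpos : ∀ n, (1:ℝ) ≤ q n := fun n => by exact_mod_cast (h.facts hF n).1
  have qmono : ∀ n, (q n:ℝ) ≤ q (n+1) := fun n => by exact_mod_cast (h.facts hF n).2.1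
  have qn : ∀ n : ℕ, (n:ℝ) ≤ q n := fun n => by exact_mod_cast (h.facts hF n).2.2.1
  have bit : ∀ n, 0 ≤ ((σ n).toNat : ℝ) ∧ ((σ n).toNat : ℝ) ≤ 1 := fun n => by
    cases σ n <;> simp
  have hqr : ∀ n, (q (n+2) : ℝ) = (gapF A B (q n) (q (n+1)) + (σ n).toNat) * q (n+1) + q n :=
    fun n => by rw [h.hq]; push_cast; ring
  -- crude step
  have step0 : ∀ n, (q (n+1) : ℝ) ≤ 3 * q n ∨ ∃ m i, n = m + 1 ∧ (q m : ℝ) < A i ∧ A i ≤ q n ∧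
      (q (n+1) : ℝ) ≤ 3 * B i ∧ q n ≤ B i := by
    intro n
    rcases n with _ | m
    · left; rw [h.q0, h.q1]; norm_num
    have h1 := hqr m
    have h2 := bit m
    have h3 := qpos (m+1)
    have h4 := qmono m
    by_cases hex : ∃ i, (q m:ℝ) < A i ∧ A i ≤ q (m+1)
    · have e : gapF A B (q m) (q (m+1)) = max 1 ⌊B hex.choose / q (m+1)⌋ := dif_pos hex
      obtain ⟨g1, g2⟩ := hex.choose_spec
      set i := hex.choose
      rw [e] at h1
      by_cases hc : (q (m+1) : ℝ) ≤ B i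
      · right
        refine ⟨m, i, rfl, g1, g2, ?_, hc⟩
        have h5 : ((max 1 ⌊B i / q (m+1)⌋ : ℤ) : ℝ) ≤ B i / q (m+1) := by
          push_cast
          apply max_le
          · rw [le_div_iff₀ (by linarith)]; linarith
          · exact Int.floor_le _
        rw [le_div_iff₀ (by linarith)] at h5
        change (q (m+2) : ℝ) ≤ _
        nlinarith
      · left
        have h5 : ((max 1 ⌊B i / q (m+1)⌋ : ℤ) : ℝ) ≤ 1 := by
          push_cast
          apply max_le le_rfl
          refine (Int.floor_le _).trans ?_
          rw [div_le_iff₀ (by linarith)]; linarith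
        change (q (m+2) : ℝ) ≤ _
        nlinarith
    · left
      have e : gapF A B (q m) (q (m+1)) = 1 := dif_neg hex
      rw [e] at h1
      change (q (m+2) : ℝ) ≤ _
      push_cast at h1
      nlinarith
  have cross : ∀ n i, (q n : ℝ) < A i → A i ≤ q (n+1) → (q (n+1) : ℝ) ≤ 3 * A i := by
    intro n i h1 h2
    rcases step0 n with h3 | ⟨m, l, rfl, g1, g2, g3, g4⟩
    · linarith
    · have : l < i := Amono.lt_iff_lt.mp (g2.trans_lt h1)
      have := hBl l i this
      linarith
  have uniq : ∀ n i l, (q n : ℝ) < A i → A i ≤ q (n+1) → (q n : ℝ) < A l → A l ≤ q (n+1) →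
      i ≤ l := by
    intro n i l h1 h2 h3 h4
    by_contra hc
    have h5 := cross n l h3 h4
    have h6 := hA3 l
    have h7 := Amono.monotone (by omega : l + 1 ≤ i)
    linarith
  have big : ∀ Y : ℝ, 1 < Y → ∃ n, (q n : ℝ) < Y ∧ Y ≤ q (n+1) := by
    intro Y hY
    have hex : ∃ n, Y ≤ q n := by
      obtain ⟨n, hn⟩ := exists_nat_ge Y
      exact ⟨n, hn.trans (qn n)⟩
    classical
    have hs := Nat.find_spec hex
    rcases hn : Nat.find hex with _ | n
    · rw [hn, h.q0] at hs; push_cast at hs; linarith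
    · refine ⟨n, ?_, by rwa [hn] at hs⟩
      have := Nat.find_min hex (m := n) (by omega)
      linarith
  constructor
  · intro i
    have hAi := hA i
    have hABi := hAB i
    obtain ⟨n, h1, h2⟩ := big (A i) (by linarith)
    have h3 := cross n i h1 h2
    have hz : ((q (n+1)).toNat : ℝ) = q (n+1) := by
      have : 0 ≤ q (n+1) := by
        have := (h.facts hF (n+1)).1; linarith
      exact_mod_cast Int.toNat_of_nonneg this
    refine ⟨(q (n+1)).toNat, by rwa [hz], by rwa [hz], ?_⟩
    rw [hz]
    refine (round_le _ (p (n+1))).trans ((h.upper hF (n+1)).trans ?_)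
    have hex : ∃ i, (q n:ℝ) < A i ∧ A i ≤ q (n+1) := ⟨i, h1, h2⟩
    have e : gapF A B (q n) (q (n+1)) = max 1 ⌊B hex.choose / q (n+1)⌋ := dif_pos hex
    obtain ⟨g1, g2⟩ := hex.choose_spec
    have hi : hex.choose = i := le_antisymm (uniq n _ _ g1 g2 h1 h2) (uniq n _ _ h1 h2 g1 g2)
    rw [hi] at e
    have h4 := hqr n
    rw [e] at h4
    have h5 := qpos (n+1)
    have h6 := qpos n
    have h7 := (bit n).1
    have h8 : B i / q (n+1) ≤ 2 * ((max 1 ⌊B i / q (n+1)⌋ : ℤ) : ℝ) := by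
      have k1 := Int.lt_floor_add_one (B i / q (n+1))
      push_cast
      have k2 := le_max_left (1:ℝ) ⌊B i / q (n+1)⌋
      have k3 := le_max_right (1:ℝ) ⌊B i / q (n+1)⌋
      linarith
    rw [div_le_iff₀ (by linarith)] at h8
    rw [div_le_div_iff₀ (by linarith [qpos (n+1+1)]) (by linarith)]
    change 1 * B i ≤ 2 * (q (n+2) : ℝ)
    nlinarith
  · intro X hX
    obtain ⟨n, h1, h2⟩ := big (2 * X) (by linarith)
    have low : ∀ x : ℤ, x ≠ 0 → (|x| : ℝ) ≤ X → 1 / (2 * q (n+1)) ≤ distNearestInt (x * ζ) := by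
      intro x hx hxX
      have a1 : 2 * |x| ≤ q (n+1) := by
        have : (2 * |(x:ℝ)|) ≤ q (n+1) := by linarith
        exact_mod_cast this
      unfold distNearestInt
      rcases lt_or_gt_of_ne hx with hneg | hpos
      · have := h.lower hF (n+1) (-x) (-round (x * ζ)) (by omega) (by rwa [abs_of_neg hneg] at a1)
        rw [← abs_neg (_ - _)]
        convert this using 2
        push_cast; ring
      · exact h.lower hF (n+1) x (round (x * ζ)) hpos (by rwa [abs_of_pos hpos] at a1)
    have h5 := qpos (n+1)
    rcases step0 n with h3 | ⟨m, l, rfl, g1, g2, g3, g4⟩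
    · left
      intro x hx hxX
      refine le_trans ?_ (low x hx hxX)
      apply one_div_le_one_div_of_le <;> linarith
    · right
      refine ⟨l, by linarith, by linarith, ?_⟩
      intro x hx hxX
      refine le_trans ?_ (low x hx hxX)
      apply one_div_le_one_div_of_le <;> linarith

lemma gap_uncountable {A B : ℕ → ℝ} (hA : ∀ i, 2 ≤ A i) (hAB : ∀ i, A i ≤ B i)
    (hBA : ∀ i, B i ≤ A (i+1)) (hA3 : ∀ i, 3 * A i < A (i+1)) :
    ¬ {ζ | Gap A B ζ}.Countable := by
  intro hc
  have hF := gapF_one_le A B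
  choose ζ p q hd using cf_exists (gapF A B) hF
  have hinj : Function.Injective ζ := by
    intro σ τ e
    have h1 := hd σ
    have h2 := hd τ
    rw [e] at h1
    exact h1.inj hF h2
  have hr : (Set.range ζ).Countable := hc.mono (by
    rintro _ ⟨σ, rfl⟩
    exact (hd σ).gap hA hAB hBA hA3)
  have : Countable (Set.range ζ) := hr
  have h3 : Countable (ℕ → Bool) :=
    (Set.rangeFactorization_injective.mpr hinj).countable
  rw [← Cardinal.mk_le_aleph0_iff] at h3
  simp only [Cardinal.mk_pi, Cardinal.mk_bool, Cardinal.prod_const, Cardinal.mk_nat] at h3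
  simp at h3
  exact absurd h3 (not_le.mpr Cardinal.aleph0_lt_continuum)

lemma exists_indep (k : ℕ) (G : Fin k → Set ℝ) (hG : ∀ j, ¬ (G j).Countable) :
    ∃ ζ : Fin k → ℝ, (∀ j, ζ j ∈ G j) ∧
      LinearIndependent ℚ (Fin.cons (1 : ℝ) ζ : Fin (k + 1) → ℝ) := by
  induction k with
  | zero =>
    refine ⟨Fin.elim0, fun j => j.elim0, ?_⟩
    rw [linearIndependent_finCons]
    refine ⟨linearIndependent_empty_type, ?_⟩
    rw [Set.range_eq_empty]; simp
  | succ k ih =>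
    obtain ⟨ζ, h1, h2⟩ := ih (fun j => G j.castSucc) (fun j => hG _)
    set V := Submodule.span ℚ (Set.range (Fin.cons (1 : ℝ) ζ : Fin (k + 1) → ℝ)) with hV
    have hc : (V : Set ℝ).Countable := by
      have : Countable V := inferInstance
      exact this
    have : ∃ y ∈ G (Fin.last k), y ∉ V := by
      by_contra! hcon
      exact hG _ (hc.mono hcon)
    obtain ⟨y, hy, hyV⟩ := this
    refine ⟨Fin.snoc ζ y, ?_, ?_⟩
    · intro j
      refine Fin.lastCases ?_ (fun j => ?_) j
      · simpa using hy
      · simpa using h1 j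
    · rw [Fin.cons_snoc_eq_snoc_cons, linearIndependent_finSnoc]
      exact ⟨h2, hyV⟩

lemma exp_sup {S : Set ℝ} {w : ℝ} (hw : 0 < w) (h1 : ∀ ν ∈ S, ν ≤ w)
    (h2 : ∀ ν, 0 < ν → ν < w → ν ∈ S) :
    sSup ((fun ν : ℝ => (ν : EReal)) '' S) = (w : EReal) := by
  apply le_antisymm
  · apply sSup_le
    rintro _ ⟨ν, hν, rfl⟩
    exact EReal.coe_le_coe_iff.mpr (h1 ν hν)
  · apply le_of_forall_lt
    intro c hc
    obtain ⟨ν, hν1, hν2⟩ := EReal.lt_iff_exists_real_btwn.mp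
      (max_lt hc (EReal.coe_lt_coe_iff.mpr hw) : max c ((0:ℝ):EReal) < w)
    have h3 : 0 < ν := EReal.coe_lt_coe_iff.mp ((le_max_right _ _).trans_lt hν1)
    refine ((le_max_left _ _).trans_lt hν1).trans_le (le_sSup ⟨ν, h2 ν h3 ?_, rfl⟩)
    exact EReal.coe_lt_coe_iff.mp hν2

lemma exists_rpow_gt {e : ℝ} (he : 0 < e) (C : ℝ) : ∃ R : ℝ, 1 ≤ R ∧ ∀ T, R ≤ T → C < T ^ e := by
  obtain ⟨R, hR⟩ := Filter.eventually_atTop.mp ((tendsto_rpow_atTop he).eventually_gt_atTop C)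
  exact ⟨max 1 R, le_max_left _ _, fun T hT => hR T ((le_max_right _ _).trans hT)⟩

lemma not_alt1 {X ν : ℝ} (hX : 1 ≤ X) (h : 12 < X ^ (ν - 1)) (h2 : 1 / (12 * X) ≤ X ^ (-ν)) :
    False := by
  have hX0 : 0 < X := by linarith
  rw [Real.rpow_neg hX0.le, ← one_div, one_div_le_one_div (by positivity) (by positivity)] at h2
  rw [Real.rpow_sub hX0, Real.rpow_one, lt_div_iff₀ hX0] at h
  linarith

lemma alt2 {X ν B : ℝ} (hX : 1 ≤ X) (hB : 0 < B) (h2 : 1 / (6 * B) ≤ X ^ (-ν)) :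
    X ^ ν ≤ 6 * B := by
  have hX0 : 0 < X := by linarith
  rwa [Real.rpow_neg hX0.le, ← one_div, one_div_le_one_div (by positivity) (by positivity)] at h2

/-- from `A ≥ R` large, `2 / A^l ≤ (3A)^(-μ)` -/
lemma up_bound {A l μ : ℝ} (hA : 1 ≤ A) (h : 2 * 3 ^ μ < A ^ (l - μ)) :
    2 / A ^ l ≤ (3 * A) ^ (-μ) := by
  have hA0 : 0 < A := by linarith
  have p1 : 0 < A ^ l := by positivity
  have p2 : 0 < A ^ μ := by positivity
  have p3 : (0:ℝ) < 3 ^ μ := by positivity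
  rw [Real.rpow_sub hA0, lt_div_iff₀ p2] at h
  rw [Real.rpow_neg (by positivity), Real.mul_rpow (by norm_num) hA0.le, ← one_div,
    div_le_div_iff₀ p1 (by positivity)]
  linarith

lemma lambda_of_gap {A : ℕ → ℝ} {lam ζ : ℝ} (hl : 1 ≤ lam) (hA2 : ∀ i, 2 ≤ A i)
    (hA : Tendsto A atTop atTop) (hG : Gap A (fun i => A i ^ lam) ζ) :
    lambda1Exp ζ = (lam : EReal) := by
  apply exp_sup (by linarith)
  · intro μ hμ
    by_contra! hc
    obtain ⟨R, hR1, hR⟩ := exists_rpow_gt (sub_pos.mpr hc) (6 * 2 ^ μ)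
    obtain ⟨X0, hX01, hX0⟩ := exists_rpow_gt (by linarith : 0 < μ - 1) 12
    obtain ⟨N, hN⟩ := exists_nat_ge (max X0 (2 * R ^ lam + 1))
    obtain ⟨q, hq, hq0, hqd⟩ := hμ N
    have hqN : (N:ℝ) ≤ q := by exact_mod_cast hq
    have hq1 : X0 ≤ q := (le_max_left _ _).trans (hN.trans hqN)
    have hq2 : 2 * R ^ lam + 1 ≤ q := (le_max_right _ _).trans (hN.trans hqN)
    have hq3 : (1:ℝ) ≤ q := hX01.trans hq1
    rcases hG.2 q hq3 with h1 | ⟨i, h1, h2, h3⟩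
    · have := h1 q (by exact_mod_cast hq0.ne') (by simp)
      exact not_alt1 hq3 (hX0 q hq1) (this.trans (by simpa using hqd))
    · have h4 := h3 q (by exact_mod_cast hq0.ne') (by simp)
      have hAi : 0 < A i := by linarith [hA2 i]
      have h5 := alt2 hq3 (by positivity) (h4.trans (by simpa using hqd))
      have h6 : R ≤ A i := by
        by_contra! hcon
        have : A i ^ lam ≤ R ^ lam := Real.rpow_le_rpow hAi.le hcon.le (by linarith)
        linarith
      have h7 := hR _ h6
      have h8 : A i ^ μ ≤ (2 * q) ^ μ := Real.rpow_le_rpow hAi.le h1 (by linarith)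
      rw [Real.mul_rpow (by norm_num) (by linarith)] at h8
      have p0 : 0 < A i ^ lam := by positivity
      have p1 : (0:ℝ) < 2 ^ μ := by positivity
      rw [Real.rpow_sub hAi, lt_div_iff₀ p0] at h7
      nlinarith
  · intro μ hμ0 hμ N
    obtain ⟨R, hR1, hR⟩ := exists_rpow_gt (sub_pos.mpr hμ) (2 * 3 ^ μ)
    obtain ⟨i, hi⟩ := (hA.eventually_ge_atTop (max R N)).exists
    obtain ⟨x, hx1, hx2, hx3⟩ := hG.1 i
    have hAi := hA2 i
    have hi1 := (le_max_left _ _).trans hi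
    have hi2 := (le_max_right _ _).trans hi
    have hx0 : (0:ℝ) < x := by linarith
    refine ⟨x, by exact_mod_cast hi2.trans hx1, by exact_mod_cast hx0, hx3.trans ?_⟩
    refine (up_bound (by linarith) (hR _ hi1)).trans ?_
    exact Real.rpow_le_rpow_of_nonpos hx0 hx2 (by linarith)

lemma chi_of_gap {k : ℕ} {ζ : Fin k → ℝ} {T : ℕ → ℝ} {A B : Fin k → ℕ → ℝ} {w l0 : ℝ}
    (hw : 1 ≤ w) (hl0 : 1 ≤ l0)
    (hA2 : ∀ j i, 2 ≤ A j i) (hT2 : ∀ i, 2 ≤ T i) (hTm : Monotone T) (hT : Tendsto T atTop atTop)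
    (hG : ∀ j, Gap (A j) (B j) (ζ j)) (hAT : ∀ j i, A j i ≤ T i) (hTB : ∀ j i, T i ^ w ≤ B j i)
    (j0 j1 : Fin k) (hA0 : ∀ i, A j0 i = T i) (hB0 : ∀ i, B j0 i = T i ^ l0)
    (hB1 : ∀ i, B j1 i = T i ^ w) (hA1 : ∀ i, T i ^ (2 * l0) ≤ A j1 (i+1))
    (hA1m : Monotone (A j1)) :
    chiExp k ζ = (w : EReal) := by
  apply exp_sup (by linarith)
  · intro ν hν
    by_contra! hc
    obtain ⟨R1, hR11, hR1⟩ := exists_rpow_gt (sub_pos.mpr hc) (6 * 2 ^ ν)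
    obtain ⟨R2, hR21, hR2⟩ := exists_rpow_gt (by linarith : 0 < l0) 12
    obtain ⟨X0, hX01, hX0⟩ := exists_rpow_gt (by linarith : 0 < ν - 1) 12
    set R := max R1 R2 with hRdef
    obtain ⟨X, hX, x, hx0, hxX, hxd⟩ := hν (max X0 (2 * R ^ l0 + 1))
    have hq1 : X0 ≤ X := (le_max_left _ _).trans hX
    have hq2 : 2 * R ^ l0 + 1 ≤ X := (le_max_right _ _).trans hX
    have hq3 : (1:ℝ) ≤ X := hX01.trans hq1
    have main : ∀ j, ∃ i, A j i ≤ 2 * X ∧ X ≤ 2 * B j i ∧ X ^ ν ≤ 6 * B j i := by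
      intro j
      rcases (hG j).2 X hq3 with h1 | ⟨i, h1, h2, h3⟩
      · exact (not_alt1 hq3 (hX0 X hq1) ((h1 _ (hx0 j) (hxX j)).trans (hxd j))).elim
      · exact ⟨i, h1, h2, alt2 hq3 (by linarith) ((h3 _ (hx0 j) (hxX j)).trans (hxd j))⟩
    obtain ⟨a, a1, a2, a3⟩ := main j0
    obtain ⟨b, b1, b2, b3⟩ := main j1
    rw [hA0] at a1
    rw [hB0] at a2 a3
    rw [hB1] at b2 b3
    have hTa : 0 < T a := by linarith [hT2 a]
    have hTb : 0 < T b := by linarith [hT2 b]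
    have h6 : R ≤ T a := by
      by_contra! hcon
      have : T a ^ l0 ≤ R ^ l0 := Real.rpow_le_rpow hTa.le hcon.le (by linarith)
      linarith
    rcases le_or_gt b a with hab | hab
    · have h7 := hR1 _ ((le_max_left _ _).trans h6)
      have h8 : T a ^ ν ≤ (2 * X) ^ ν := Real.rpow_le_rpow hTa.le a1 (by linarith)
      rw [Real.mul_rpow (by norm_num) (by linarith)] at h8
      have p0 : 0 < T a ^ w := by positivity
      have p1 : (0:ℝ) < 2 ^ ν := by positivity
      have h9 : T b ^ w ≤ T a ^ w := Real.rpow_le_rpow hTb.le (hTm hab) (by linarith)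
      rw [Real.rpow_sub hTa, lt_div_iff₀ p0] at h7
      nlinarith
    · have h7 := hR2 _ ((le_max_right _ _).trans h6)
      have h8 := hA1 a
      have h9 := hA1m (show a + 1 ≤ b from hab)
      have h10 : X ≤ X ^ ν := by
        conv_lhs => rw [← Real.rpow_one X]
        exact Real.rpow_le_rpow_of_exponent_le hq3 (by linarith)
      rw [two_mul, Real.rpow_add hTa] at h8
      nlinarith
  · intro ν hν0 hν X0
    obtain ⟨R, hR1, hR⟩ := exists_rpow_gt (sub_pos.mpr hν) (2 * 3 ^ ν)
    obtain ⟨i, hi⟩ := (hT.eventually_ge_atTop (max R X0)).exists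
    have hi1 := (le_max_left _ _).trans hi
    have hi2 := (le_max_right _ _).trans hi
    have hTi := hT2 i
    choose x hx1 hx2 hx3 using fun j => (hG j).1 i
    have hTw : 0 < T i ^ w := by positivity
    refine ⟨3 * T i, by linarith, fun j => x j, ?_, ?_, ?_⟩
    · intro j h0
      have h0' : x j = 0 := by simpa using h0
      have h1 := hx1 j
      rw [h0'] at h1
      have := hA2 j i
      push_cast at h1
      linarith
    · intro j
      have := hAT j i
      have := hx2 j
      simp
      linarith
    · intro j
      refine le_trans (by simpa using hx3 j) (le_trans ?_ (up_bound (by linarith) (hR _ hi1)))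
      exact div_le_div_of_nonneg_left (by norm_num) hTw (hTB j i)

/-- For every integer `k ≥ 2` and all reals `λ₁,…,λ_k, w` with
`1 ≤ w ≤ min_j λ_j`, there exist uncountably many vectors `(ζ₁,…,ζ_k) ∈ ℝ^k`,
ℚ-linearly independent together with `1`, such that `λ₁(ζ_j) = λ_j` for each `j` and
`χ_k(ζ₁,…,ζ_k) = w`. -/
theorem uncountably_many_prescribed_exponents (k : ℕ) (hk : 2 ≤ k)
    (lam : Fin k → ℝ) (w : ℝ) (hw1 : 1 ≤ w) (hwlam : ∀ j, w ≤ lam j) :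
    ¬ Set.Countable {ζ : Fin k → ℝ |
        LinearIndependent ℚ (Fin.cons (1 : ℝ) ζ : Fin (k + 1) → ℝ) ∧
        (∀ j, lambda1Exp (ζ j) = (lam j : EReal)) ∧
        chiExp k ζ = (w : EReal)} := by
  classical
  intro hS
  set j0 : Fin k := ⟨0, by omega⟩ with hj0
  set j1 : Fin k := ⟨1, by omega⟩ with hj1
  have hj01 : j1 ≠ j0 := by simp [hj0, hj1]
  have hlpos : ∀ j, 0 < lam j := fun j => by linarith [hwlam j]
  have hl1 : ∀ j, 1 ≤ lam j := fun j => hw1.trans (hwlam j)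
  set α : Fin k → ℝ := fun j => if j = j0 then 1 else w / lam j with hα
  have α0 : α j0 = 1 := by simp [hα]
  have α1 : ∀ j, j ≠ j0 → α j = w / lam j := fun j hj => by simp [hα, hj]
  have αpos : ∀ j, 0 < α j := by
    intro j
    by_cases hj : j = j0
    · rw [hj, α0]; norm_num
    · rw [α1 j hj]; exact div_pos (by linarith) (hlpos j)
  have αle : ∀ j, α j ≤ 1 := by
    intro j
    by_cases hj : j = j0
    · rw [hj, α0]
    · rw [α1 j hj, div_le_one (hlpos j)]; exact hwlam j
  have αw : ∀ j, w ≤ α j * lam j := by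
    intro j
    by_cases hj : j = j0
    · rw [hj, α0, one_mul]; exact hwlam j0
    · rw [α1 j hj, div_mul_cancel₀ _ (hlpos j).ne']
  obtain ⟨K, hK3, hK⟩ : ∃ K : ℕ, 3 ≤ K ∧
      ∀ j, 2 * lam j0 + 1 + α j * lam j ≤ K * α j := by
    obtain ⟨M, hM⟩ := (Set.finite_range
      (fun j => (2 * lam j0 + 1 + α j * lam j) / α j)).bddAbove
    obtain ⟨K, hK⟩ := exists_nat_ge M
    refine ⟨max K 3, le_max_right _ _, fun j => ?_⟩
    rw [← div_le_iff₀ (αpos j)]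
    refine (hM ⟨j, rfl⟩).trans (hK.trans ?_)
    exact_mod_cast le_max_left _ _
  set T : ℕ → ℝ := fun i => (2:ℝ) ^ (K ^ (i+1)) with hTdef
  have hK1 : 1 < K := by omega
  have Tsucc : ∀ i, T (i+1) = T i ^ K := fun i => by
    simp only [hTdef]; rw [← pow_mul, ← pow_succ]
  have Tge : ∀ i, (2:ℝ) ^ K ≤ T i := fun i => by
    apply pow_le_pow_right₀ (by norm_num)
    exact Nat.le_self_pow (by omega) K
  have T2 : ∀ i, 2 ≤ T i := fun i => by
    refine le_trans ?_ (Tge i)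
    exact le_self_pow₀ (by norm_num) (by omega)
  have T0 : ∀ i, 0 < T i := fun i => by linarith [T2 i]
  have T1 : ∀ i, 1 ≤ T i := fun i => by linarith [T2 i]
  have Tmono : Monotone T := by
    apply monotone_nat_of_le_succ
    intro i
    rw [Tsucc]
    exact le_self_pow₀ (T1 i) (by omega)
  have Ttend : Tendsto T atTop atTop := by
    apply (tendsto_pow_atTop_atTop_of_one_lt (by norm_num : (1:ℝ) < 2)).comp
    exact (tendsto_pow_atTop_atTop_of_one_lt hK1).comp (tendsto_add_atTop_nat 1)
  set A : Fin k → ℕ → ℝ := fun j i => T i ^ α j with hAdef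
  set B : Fin k → ℕ → ℝ := fun j i => A j i ^ lam j with hBdef
  have Beq : ∀ j i, B j i = T i ^ (α j * lam j) := fun j i => by
    simp only [hBdef, hAdef]; rw [← Real.rpow_mul (T0 i).le]
  have Asucc : ∀ j i, A j (i+1) = T i ^ (K * α j) := fun j i => by
    simp only [hAdef]; rw [Tsucc, ← Real.rpow_natCast, ← Real.rpow_mul (T0 i).le]
  have hl0 := hl1 j0
  have A2 : ∀ j i, 2 ≤ A j i := by
    intro j i
    have h1 : ((2:ℝ) ^ K) ^ α j ≤ A j i :=
      Real.rpow_le_rpow (by positivity) (Tge i) (αpos j).le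
    rw [← Real.rpow_natCast, ← Real.rpow_mul (by norm_num)] at h1
    refine le_trans ?_ h1
    conv_lhs => rw [← Real.rpow_one (2:ℝ)]
    apply Real.rpow_le_rpow_of_exponent_le (by norm_num)
    have := hK j; have := αw j
    linarith
  have AB : ∀ j i, A j i ≤ B j i := by
    intro j i
    simp only [hBdef]
    conv_lhs => rw [← Real.rpow_one (A j i)]
    exact Real.rpow_le_rpow_of_exponent_le (by linarith [A2 j i]) (hl1 j)
  have BA : ∀ j i, B j i ≤ A j (i+1) := by
    intro j i
    rw [Beq, Asucc]
    apply Real.rpow_le_rpow_of_exponent_le (T1 i)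
    linarith [hK j]
  have A3 : ∀ j i, 3 * A j i < A j (i+1) := by
    intro j i
    have e : A j (i+1) = A j i ^ K := by
      rw [Asucc, mul_comm, Real.rpow_mul (T0 i).le, Real.rpow_natCast]
    have h2 := A2 j i
    have h3 : A j i ^ 3 ≤ A j i ^ K := pow_le_pow_right₀ (by linarith) hK3
    rw [e]
    refine lt_of_lt_of_le ?_ h3
    nlinarith [mul_le_mul h2 h2 (by norm_num) (by linarith)]
  have unc : ∀ j, ¬ {ζ | Gap (A j) (B j) ζ}.Countable := fun j =>
    gap_uncountable (A2 j) (AB j) (BA j) (A3 j)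
  set G : Fin k → Set ℝ := fun j =>
    {ζ | Gap (A j) (B j) ζ} \ ((fun ζ : Fin k → ℝ => ζ j) '' {ζ : Fin k → ℝ |
        LinearIndependent ℚ (Fin.cons (1 : ℝ) ζ : Fin (k + 1) → ℝ) ∧
        (∀ j, lambda1Exp (ζ j) = (lam j : EReal)) ∧
        chiExp k ζ = (w : EReal)}) with hG
  have hGunc : ∀ j, ¬ (G j).Countable := by
    intro j hc
    apply unc j
    have := hc.union (hS.image (fun ζ : Fin k → ℝ => ζ j))
    refine this.mono ?_
    rw [hG]
    simp only [Set.sdiff_union_self]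
    exact Set.subset_union_left
  obtain ⟨ζ, hζ, hind⟩ := exists_indep k G hGunc
  apply (hζ j0).2
  refine ⟨ζ, ⟨hind, fun j => ?_, ?_⟩, rfl⟩
  · refine lambda_of_gap (hl1 j) (A2 j) ?_ (hζ j).1
    exact (tendsto_rpow_atTop (αpos j)).comp Ttend
  · refine chi_of_gap (T := T) (A := A) (B := B) (l0 := lam j0) hw1 hl0 A2 T2 Tmono Ttend
      (fun j => (hζ j).1) ?_ ?_ j0 j1 ?_ ?_ ?_ ?_ ?_
    · intro j i
      simp only [hAdef]
      conv_rhs => rw [← Real.rpow_one (T i)]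
      exact Real.rpow_le_rpow_of_exponent_le (T1 i) (αle j)
    · intro j i
      rw [Beq]
      exact Real.rpow_le_rpow_of_exponent_le (T1 i) (αw j)
    · intro i; simp only [hAdef]; rw [α0, Real.rpow_one]
    · intro i; rw [Beq, α0, one_mul]
    · intro i; rw [Beq, α1 j1 hj01, div_mul_cancel₀ _ (hlpos j1).ne']
    · intro i
      rw [Asucc]
      apply Real.rpow_le_rpow_of_exponent_le (T1 i)
      have := hK j1; have := αw j1
      linarith
    · apply monotone_nat_of_le_succ
      intro i
      have := A3 j1 i; have := A2 j1 i
      linarith
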